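/- Let f : ℝ^{m×n} → ℝ be L-smooth with respect to the Frobenius norm and bounded below by f⋆ = inf_W f(W) > −∞. Let η > 0, μ > 0, and let (W_t)_{t≥0} satisfy W_{t+1} = W_t + ΔW_t with ⟨∇f(W_t), ΔW_t⟩ ≤ −μ·η·‖∇f(W_t)‖_F² and ‖ΔW_t‖_F ≤ η·√(mn) for all t. Then for every T ≥ 1, (1/T)·Σ_{t=0}^{T−1} ‖∇f(W_t)‖_F² ≤ (f(W_0) − f⋆)/(μ·η·T) + (L/(2μ))·η·mn. -/

import Mathlib

open scoped RealInnerProductSpace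

theorem descent_aux {E : Type*} [NormedAddCommGroup E] [InnerProductSpace ℝ E] [CompleteSpace E]
    (f : E → ℝ) (L : ℝ) (hdiff : Differentiable ℝ f)
    (hlip : ∀ X Y, ‖gradient f X - gradient f Y‖ ≤ L * ‖X - Y‖) (x d : E) :
    f (x + d) ≤ f x + inner ℝ (gradient f x) d + L / 2 * ‖d‖ ^ 2 := by
  let g : ℝ → ℝ := fun s => f (x + s • d) - s * inner ℝ (gradient f x) d - L / 2 * ‖d‖ ^ 2 * s ^ 2
  have hg : ∀ s, HasDerivAt g (inner ℝ (gradient f (x + s • d)) d - inner ℝ (gradient f x) d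
      - L * ‖d‖ ^ 2 * s) s := by
    intro s
    have h1 : HasDerivAt (fun s : ℝ => x + s • d) d s := by
      simpa using ((hasDerivAt_id s).smul_const d).const_add x
    have h2 := (hdiff (x + s • d)).hasGradientAt.hasFDerivAt.comp_hasDerivAt s h1
    have h3 := (h2.sub ((hasDerivAt_id s).mul_const (inner ℝ (gradient f x) d))).sub
      ((hasDerivAt_pow 2 s).const_mul (L / 2 * ‖d‖ ^ 2))
    refine h3.congr_deriv ?_
    simp
    ring
  have hanti : AntitoneOn g (Set.Icc 0 1) := by
    apply antitoneOn_of_deriv_nonpos (convex_Icc 0 1)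
    · exact fun s _ => (hg s).continuousAt.continuousWithinAt
    · exact fun s _ => (hg s).differentiableAt.differentiableWithinAt
    · intro s hs
      rw [interior_Icc] at hs
      rw [(hg s).deriv, ← inner_sub_left]
      have h1 := real_inner_le_norm (gradient f (x + s • d) - gradient f x) d
      have h2 := hlip (x + s • d) x
      rw [add_sub_cancel_left, norm_smul, Real.norm_of_nonneg hs.1.le] at h2
      have h3 := mul_le_mul_of_nonneg_right h2 (norm_nonneg d)
      nlinarith
  have h := hanti (Set.left_mem_Icc.2 zero_le_one) (Set.right_mem_Icc.2 zero_le_one) zero_le_one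
  simp only [g, one_smul, zero_smul, add_zero, one_mul, zero_mul, one_pow] at h
  linarith

/-- Stationarity guarantee for RMS-calibrated, damping-only updates:
if `f` is `L`-smooth on `ℝ^{m×n}` (Frobenius geometry) and bounded below with
infimum `f⋆ = sInf (range f)`, `η, μ > 0`, and the iterates satisfy
`W_{t+1} = W_t + ΔW_t` with alignment `⟨∇f(W_t), ΔW_t⟩ ≤ −μη‖∇f(W_t)‖²` and
norm bound `‖ΔW_t‖ ≤ η√(mn)`, then for every `T ≥ 1`,
`(1/T)Σ_{t<T} ‖∇f(W_t)‖² ≤ (f(W_0) − f⋆)/(μηT) + (L/(2μ))·η·mn`. -/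
theorem trasmuon_stationarity {m n : ℕ}
    (f : EuclideanSpace ℝ (Fin m × Fin n) → ℝ) (L η μ : ℝ)
    (hdiff : Differentiable ℝ f)
    (hlip : ∀ X Y, ‖gradient f X - gradient f Y‖ ≤ L * ‖X - Y‖)
    (hbdd : BddBelow (Set.range f))
    (hη : 0 < η) (hμ : 0 < μ)
    (W ΔW : ℕ → EuclideanSpace ℝ (Fin m × Fin n))
    (hstep : ∀ t, W (t + 1) = W t + ΔW t)
    (halign : ∀ t, ⟪gradient f (W t), ΔW t⟫ ≤ -(μ * η * ‖gradient f (W t)‖ ^ 2))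
    (hbound : ∀ t, ‖ΔW t‖ ≤ η * Real.sqrt (m * n)) :
    ∀ T : ℕ, 1 ≤ T →
      (1 / (T : ℝ)) * ∑ t ∈ Finset.range T, ‖gradient f (W t)‖ ^ 2 ≤
        (f (W 0) - sInf (Set.range f)) / (μ * η * T) + L / (2 * μ) * η * (m * n) := by
  intro T hT
  have hT' : (0 : ℝ) < T := by exact_mod_cast hT
  have hsq : Real.sqrt (m * n) ^ 2 = (m * n : ℝ) := Real.sq_sqrt (by positivity)
  have hL : 0 ≤ L ∨ (m * n : ℝ) = 0 := by
    rcases Nat.eq_zero_or_pos m with hm | hm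
    · right; simp [hm]
    rcases Nat.eq_zero_or_pos n with hn | hn
    · right; simp [hn]
    left
    have h := (norm_nonneg _).trans
      (hlip (EuclideanSpace.single ((⟨0, hm⟩, ⟨0, hn⟩) : Fin m × Fin n) (1 : ℝ)) 0)
    simpa using h
  have hLb : ∀ t, L * ‖ΔW t‖ ^ 2 ≤ L * (η ^ 2 * (m * n)) := by
    intro t
    have h2 : ‖ΔW t‖ ^ 2 ≤ η ^ 2 * (m * n) := by
      rw [← hsq, ← mul_pow]
      exact pow_le_pow_left₀ (norm_nonneg _) (hbound t) 2
    rcases hL with hL | h0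
    · exact mul_le_mul_of_nonneg_left h2 hL
    · rw [h0, mul_zero] at h2
      have h3 : ‖ΔW t‖ ^ 2 = 0 := le_antisymm h2 (sq_nonneg _)
      simp [h3, h0]
  have hone : ∀ t, μ * η * ‖gradient f (W t)‖ ^ 2 ≤
      f (W t) - f (W (t + 1)) + L / 2 * (η ^ 2 * (m * n)) := by
    intro t
    have h := descent_aux f L hdiff hlip (W t) (ΔW t)
    rw [← hstep] at h
    have h1 := halign t
    have h2 := hLb t
    linarith
  have hsum : ∀ N : ℕ, μ * η * ∑ t ∈ Finset.range N, ‖gradient f (W t)‖ ^ 2 ≤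
      f (W 0) - f (W N) + N * (L / 2 * (η ^ 2 * (m * n))) := by
    intro N
    induction N with
    | zero => simp
    | succ k ih =>
      rw [Finset.sum_range_succ, mul_add]
      push_cast
      have := hone k
      linarith
  have hinf : sInf (Set.range f) ≤ f (W T) := csInf_le hbdd ⟨_, rfl⟩
  have h := hsum T
  have e : (f (W 0) - sInf (Set.range f)) / (μ * η * T) + L / (2 * μ) * η * (m * n) =
      (f (W 0) - sInf (Set.range f) + T * (L / 2 * (η ^ 2 * (m * n)))) / (μ * η * T) := by
    field_simp
  rw [e, le_div_iff₀ (by positivity)]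
  have e2 : (1 / (T : ℝ)) * (∑ t ∈ Finset.range T, ‖gradient f (W t)‖ ^ 2) * (μ * η * T) =
      μ * η * ∑ t ∈ Finset.range T, ‖gradient f (W t)‖ ^ 2 := by
    field_simp
  rw [e2]
  linarith
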